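/- Strong Jordan separation, extension part: Let f : S¹ → S² be a continuous map whose set of injective points I(f) = {p ∈ S¹ : f⁻¹({f(p)}) = {p}} contains a nonempty open subset U of S¹, let q ∈ U and p := f(q). If F : D² → S² is any continuous map whose restriction to S¹ = ∂D² equals f, then there exists a connected component C of S² \ f(S¹) such that p lies in the closure of C and C ⊆ F(D²). -/

import Mathlib

open Metric Set

noncomputable section

/-- The unit circle in the Euclidean plane. -/
def circleS : Set (EuclideanSpace ℝ (Fin 2)) := Metric.sphere 0 1

/-- The closed unit disk in the Euclidean plane. -/
def diskS : Set (EuclideanSpace ℝ (Fin 2)) := Metric.closedBall 0 1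

/-- The unit sphere in Euclidean 3-space. -/
def sphereS : Set (EuclideanSpace ℝ (Fin 3)) := Metric.sphere 0 1

/-- The set of injective points of `f : S¹ → S²`. -/
def injPts (f : EuclideanSpace ℝ (Fin 2) → EuclideanSpace ℝ (Fin 3)) :
    Set (EuclideanSpace ℝ (Fin 2)) :=
  {p | p ∈ circleS ∧ ∀ q ∈ circleS, f q = f p → q = p}

/-- `C` is a connected component of the set `A` (with its subspace topology). -/
def IsCompOf (C A : Set (EuclideanSpace ℝ (Fin 3))) : Prop :=
  ∃ x ∈ A, C = connectedComponentIn A x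

/-!
A continuous map `h : K → ℂ \ {0}` on a compact set may or may not have a continuous logarithm.
Eilenberg's criterion: if `(z - x) / (z - y)` has one on a compact `K ⊆ ℂ`, then `x` and `y` lie
in the same component of `ℂ \ K`. For a closed curve `φ`, having a continuous logarithm of `φ - x`
means that the winding number of `φ` about `x` is zero.

Project the sphere stereographically from a point missed by `F`, or, if `F` is onto and the
inclusion `C ⊆ F(D²)` is trivial, from a point off the curve. Near an injective point `p` the
curve is an injective arc, of which one piece is a chord of a small disc. The chord separates the
disc, and both sides accumulate at `p`. If `φ` had winding number zero about points `x`, `y` near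
`p` on the two sides, the resulting logarithm of `(φ - x) / (φ - y)` could be transplanted, along
the theta curve formed by the chord and the two ways of joining its ends, to the chord together
with the circle bounding the disc, contradicting Eilenberg's criterion. Hence some component of
the complement adherent to `p` has nonzero winding number. It lies in `F(D²)`: were one of its
points missed by `F`, the logarithm that exists on the simply connected disc would restrict to the
boundary curve.
-/

/-- The function `h` has a continuous logarithm on `S`. For a closed curve `φ` and a point `z` off
its trace, `φ · - z` has one exactly when the winding number of `φ` about `z` vanishes; this is how
winding numbers enter below. -/
def HasContinuousLogOn {X : Type*} [TopologicalSpace X] (h : X → ℂ) (S : Set X) : Prop :=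
  ∃ L : X → ℂ, ContinuousOn L S ∧ ∀ x ∈ S, Complex.exp (L x) = h x

theorem one_sub_mem_slitPlane {w : ℂ} (hw : ‖w‖ ≤ 1) (hw1 : w ≠ 1) :
    1 - w ∈ Complex.slitPlane := by
  have hre : w.re ≤ 1 := (Complex.re_le_norm w).trans hw
  by_contra hslit
  rw [Complex.mem_slitPlane_iff, not_or] at hslit
  have him : w.im = 0 := by simpa using hslit.2
  exact hw1 (Complex.ext (le_antisymm hre (by simpa using hslit.1)) him)

section ContinuousLog

variable {X Y : Type*} [TopologicalSpace X] [TopologicalSpace Y] {h k : X → ℂ} {S T : Set X}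

theorem sub_eq_sub_of_exp_eq_exp (hS : IsPreconnected S) {l m : X → ℂ} (hl : ContinuousOn l S)
    (hm : ContinuousOn m S) (hlm : ∀ x ∈ S, Complex.exp (l x) = Complex.exp (m x))
    {x y : X} (hx : x ∈ S) (hy : y ∈ S) : l x - m x = l y - m y := by
  have hexp : ∀ z ∈ S, Complex.exp (l z - m z) = 1 := fun z hz => by
    rw [Complex.exp_sub, hlm z hz, div_self (Complex.exp_ne_zero _)]
  refine (Complex.isCoveringMap_exp.eqOn_of_comp_eqOn (g₁ := fun z => l z - m z)
    (g₂ := fun _ => l x - m x) hS (hl.sub hm) continuousOn_const ?_ hx rfl hy).symm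
  intro z hz
  simp only [Function.comp, hexp z hz, hexp x hx]

namespace HasContinuousLogOn

theorem continuousOn (hh : HasContinuousLogOn h S) : ContinuousOn h S := by
  obtain ⟨L, hL, hexp⟩ := hh
  exact hL.cexp.congr fun x hx => (hexp x hx).symm

theorem ne_zero (hh : HasContinuousLogOn h S) {x : X} (hx : x ∈ S) : h x ≠ 0 := by
  obtain ⟨L, -, hexp⟩ := hh
  exact hexp x hx ▸ Complex.exp_ne_zero _

theorem mono (hh : HasContinuousLogOn h T) (hST : S ⊆ T) : HasContinuousLogOn h S := by
  obtain ⟨L, hL, hexp⟩ := hh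
  exact ⟨L, hL.mono hST, fun x hx => hexp x (hST hx)⟩

theorem congr (hh : HasContinuousLogOn h S) (hk : EqOn k h S) : HasContinuousLogOn k S := by
  obtain ⟨L, hL, hexp⟩ := hh
  exact ⟨L, hL, fun x hx => (hexp x hx).trans (hk hx).symm⟩

theorem mul (hh : HasContinuousLogOn h S) (hk : HasContinuousLogOn k S) :
    HasContinuousLogOn (fun x => h x * k x) S := by
  obtain ⟨L, hL, hexpL⟩ := hh
  obtain ⟨M, hM, hexpM⟩ := hk
  exact ⟨fun x => L x + M x, hL.add hM, fun x hx => by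
    rw [Complex.exp_add, hexpL x hx, hexpM x hx]⟩

theorem div (hh : HasContinuousLogOn h S) (hk : HasContinuousLogOn k S) :
    HasContinuousLogOn (fun x => h x / k x) S := by
  obtain ⟨L, hL, hexpL⟩ := hh
  obtain ⟨M, hM, hexpM⟩ := hk
  exact ⟨fun x => L x - M x, hL.sub hM, fun x hx => by
    rw [Complex.exp_sub, hexpL x hx, hexpM x hx]⟩

theorem const {c : ℂ} (hc : c ≠ 0) : HasContinuousLogOn (fun _ => c) S :=
  ⟨fun _ => Complex.log c, continuousOn_const, fun _ _ => Complex.exp_log hc⟩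

theorem comp (hh : HasContinuousLogOn h S) {g : Y → X} {T : Set Y} (hg : ContinuousOn g T)
    (hgT : MapsTo g T S) : HasContinuousLogOn (h ∘ g) T := by
  obtain ⟨L, hL, hexp⟩ := hh
  exact ⟨L ∘ g, hL.comp hg hgT, fun y hy => hexp (g y) (hgT hy)⟩

theorem of_mem_slitPlane (hh : ContinuousOn h S) (hS : ∀ x ∈ S, h x ∈ Complex.slitPlane) :
    HasContinuousLogOn h S :=
  ⟨fun x => Complex.log (h x), hh.clog hS, fun x hx =>
    Complex.exp_log (Complex.slitPlane_ne_zero (hS x hx))⟩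

theorem of_norm_sub_lt (hh : HasContinuousLogOn h S) (hk : ContinuousOn k S)
    (hkh : ∀ x ∈ S, ‖k x - h x‖ < ‖h x‖) : HasContinuousLogOn k S := by
  have hquot : HasContinuousLogOn (fun x => 1 - (h x - k x) / h x) S := by
    refine of_mem_slitPlane (continuousOn_const.sub ((hh.continuousOn.sub hk).div hh.continuousOn
      fun x hx => hh.ne_zero hx)) fun x hx => ?_
    have hlt : ‖(h x - k x) / h x‖ < 1 := by
      rw [norm_div, div_lt_one (norm_pos_iff.2 (hh.ne_zero hx)), norm_sub_rev]
      exact hkh x hx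
    exact one_sub_mem_slitPlane hlt.le fun h1 => by simp [h1] at hlt
  refine (hh.mul hquot).congr fun x hx => ?_
  field_simp [hh.ne_zero hx]
  ring

theorem of_simplyConnectedSpace [SimplyConnectedSpace X] [LocallyPathConnectedSpace X]
    (hh : Continuous h) (h0 : ∀ x, h x ≠ 0) : HasContinuousLogOn h univ := by
  obtain ⟨a⟩ : Nonempty X := inferInstance
  obtain ⟨L, ⟨-, hL⟩, -⟩ := Complex.isCoveringMapOn_exp.existsUnique_continuousMap_lifts
    ⟨h, hh⟩ (Complex.exp_log (h0 a)) h0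
  exact ⟨L, L.continuous.continuousOn, fun x _ => congrFun hL x⟩

theorem of_convex {E : Type*} [AddCommGroup E] [TopologicalSpace E] [IsTopologicalAddGroup E]
    [Module ℝ E] [ContinuousSMul ℝ E] [LocallyConvexSpace ℝ E] {S : Set E} {h : E → ℂ}
    (hS : Convex ℝ S) (hh : ContinuousOn h S) (h0 : ∀ x ∈ S, h x ≠ 0) :
    HasContinuousLogOn h S := by
  classical
  rcases S.eq_empty_or_nonempty with rfl | hne
  · exact ⟨0, continuousOn_empty _, by simp⟩
  have := hS.contractibleSpace hne
  have := hS.locallyPathConnectedSpace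
  obtain ⟨L, hL, hexp⟩ := of_simplyConnectedSpace hh.domRestrict fun x => h0 x x.2
  refine ⟨fun x => if hx : x ∈ S then L ⟨x, hx⟩ else 0, ?_, fun x hx => ?_⟩
  · rw [continuousOn_iff_continuous_domRestrict]
    exact (continuousOn_univ.1 hL).congr fun x => by simp
  · simpa [hx] using hexp ⟨x, hx⟩ (mem_univ _)

theorem union_of_eqOn {l m : X → ℂ} (hS : IsClosed S) (hT : IsClosed T) (hl : ContinuousOn l S)
    (hm : ContinuousOn m T) (hlh : ∀ x ∈ S, Complex.exp (l x) = h x)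
    (hmh : ∀ x ∈ T, Complex.exp (m x) = h x) (hlm : EqOn l m (S ∩ T)) :
    HasContinuousLogOn h (S ∪ T) := by
  classical
  have hmT : EqOn (S.piecewise l m) m T := fun x hx => by
    by_cases hxS : x ∈ S
    · rw [piecewise_eq_of_mem _ _ _ hxS, hlm ⟨hxS, hx⟩]
    · exact piecewise_eq_of_notMem _ _ _ hxS
  refine ⟨S.piecewise l m, (hl.congr (piecewise_eqOn S l m)).union_of_isClosed (hm.congr hmT)
    hS hT, ?_⟩
  rintro x (hx | hx)
  · rw [piecewise_eqOn S l m hx, hlh x hx]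
  · rw [hmT hx, hmh x hx]

theorem union (hS : IsClosed S) (hT : IsClosed T) (hST : IsPreconnected (S ∩ T))
    (hhS : HasContinuousLogOn h S) (hhT : HasContinuousLogOn h T) :
    HasContinuousLogOn h (S ∪ T) := by
  obtain ⟨l, hl, hexpl⟩ := hhS
  obtain ⟨m, hm, hexpm⟩ := hhT
  rcases (S ∩ T).eq_empty_or_nonempty with hempty | ⟨p, hp⟩
  · exact union_of_eqOn hS hT hl hm hexpl hexpm (by simp [hempty])
  have hexp : ∀ x ∈ S ∩ T, Complex.exp (l x) = Complex.exp (m x) := fun x hx =>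
    (hexpl x hx.1).trans (hexpm x hx.2).symm
  have hconst : ∀ x ∈ S ∩ T, l x - m x = l p - m p := fun x hx =>
    sub_eq_sub_of_exp_eq_exp hST (hl.mono inter_subset_left) (hm.mono inter_subset_right) hexp hx hp
  refine union_of_eqOn hS hT hl (m := fun x => m x + (l p - m p)) (hm.add continuousOn_const) hexpl
    (fun x hx => ?_) fun x hx => ?_
  · rw [Complex.exp_add, Complex.exp_sub, hexp p hp, div_self (Complex.exp_ne_zero _), mul_one,
      hexpm x hx]
  · rw [← hconst x hx]
    ring

end HasContinuousLogOn

theorem continuousOn_image_of_comp {Z : Type*} [TopologicalSpace Z] [T2Space Y] {α : X → Y}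
    {m : Y → Z} (hS : IsCompact S) (hα : ContinuousOn α S) (hm : ContinuousOn (m ∘ α) S) :
    ContinuousOn m (α '' S) := by
  rw [continuousOn_iff_isClosed] at hm ⊢
  intro C hC
  obtain ⟨D, hD, hCD⟩ := hm C hC
  refine ⟨α '' (D ∩ S), ((hS.inter_left hD).image_of_continuousOn
    (hα.mono inter_subset_right)).isClosed, ?_⟩
  rw [← hCD, inter_eq_left.2 (image_mono inter_subset_right), preimage_comp,
    image_preimage_inter]

theorem exists_continuousOn_image_comp_eqOn {Z : Type*} [TopologicalSpace Z] [Nonempty X]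
    [T2Space Y] {α : X → Y} {l : X → Z} (hS : IsCompact S) (hα : ContinuousOn α S)
    (hinj : InjOn α S) (hl : ContinuousOn l S) :
    ∃ m : Y → Z, ContinuousOn m (α '' S) ∧ EqOn (m ∘ α) l S := by
  have heq : EqOn ((l ∘ Function.invFunOn α S) ∘ α) l S := fun x hx =>
    congrArg l (hinj.leftInvOn_invFunOn hx)
  exact ⟨_, continuousOn_image_of_comp hS hα (hl.congr heq), heq⟩

namespace HasContinuousLogOn

variable [T2Space Y] {φ : X → Y} {g : Y → ℂ}

theorem image_of_injOn (hS : IsCompact S) (hφ : ContinuousOn φ S) (hinj : InjOn φ S)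
    (hg : HasContinuousLogOn (g ∘ φ) S) : HasContinuousLogOn g (φ '' S) := by
  obtain ⟨l, hl, hexp⟩ := hg
  rcases S.eq_empty_or_nonempty with rfl | ⟨x, -⟩
  · exact ⟨0, by simp, by simp⟩
  have : Nonempty X := ⟨x⟩
  obtain ⟨m, hm, hml⟩ := exists_continuousOn_image_comp_eqOn hS hφ hinj hl
  exact ⟨m, hm, forall_mem_image.2 fun x hx => (congrArg Complex.exp (hml hx)).trans (hexp x hx)⟩

/- `Q`, `φ '' A` and `φ '' B` play the roles of the three arcs of a theta curve: connectedness of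
`B` makes the logarithms on `A ∪ B` and on `Q ∪ φ '' B` differ by a constant there. -/
theorem union_image_of_theta {A B : Set X} {Q : Set Y} (hA : IsCompact A)
    (hφ : ContinuousOn φ (A ∪ B)) (hinj : InjOn φ A) (hB : IsConnected B) (hQ : IsClosed Q)
    (hAQ : A ∩ φ ⁻¹' Q ⊆ B) (hAB : HasContinuousLogOn (g ∘ φ) (A ∪ B))
    (hQB : HasContinuousLogOn g (Q ∪ φ '' B)) : HasContinuousLogOn g (Q ∪ φ '' A) := by
  obtain ⟨l, hl, hexpl⟩ := hAB
  obtain ⟨M, hM, hexpM⟩ := hQB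
  obtain ⟨b, hb⟩ := hB.nonempty
  have hφA : ContinuousOn φ A := hφ.mono subset_union_left
  have : Nonempty X := ⟨b⟩
  obtain ⟨m, hm, hml⟩ := exists_continuousOn_image_comp_eqOn hA hφA hinj (hl.mono subset_union_left)
  have hMB : MapsTo φ B (Q ∪ φ '' B) := fun x hx => Or.inr (mem_image_of_mem φ hx)
  have hexp : ∀ x ∈ B, Complex.exp (l x) = Complex.exp ((M ∘ φ) x) := fun x hx => by
    rw [hexpl x (Or.inr hx), Function.comp_apply, Function.comp_apply, hexpM _ (hMB hx)]
  have hconst : ∀ x ∈ B, l x - M (φ x) = l b - M (φ b) := fun x hx =>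
    sub_eq_sub_of_exp_eq_exp hB.isPreconnected (hl.mono subset_union_right)
      (hM.comp (hφ.mono subset_union_right) hMB) hexp hx hb
  refine union_of_eqOn hQ (hA.image_of_continuousOn hφA).isClosed
    (l := fun y => M y + (l b - M (φ b))) ((hM.mono subset_union_left).add continuousOn_const)
    hm (fun y hy => ?_) (forall_mem_image.2 fun x hx =>
      (congrArg Complex.exp (hml hx)).trans (hexpl x (Or.inl hx))) ?_
  · rw [Complex.exp_add, Complex.exp_sub, hexp b hb, Function.comp_apply,
      div_self (Complex.exp_ne_zero _), mul_one, hexpM y (Or.inl hy)]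
  · rintro _ ⟨hxQ, x, hx, rfl⟩
    change _ = (m ∘ φ) x
    rw [hml hx, ← hconst x (hAQ ⟨hx, hxQ⟩)]
    ring

end HasContinuousLogOn

end ContinuousLog

section Eilenberg

theorem hasContinuousLogOn_sub_div_sub_compl_ball {p x y : ℂ} {r : ℝ} (hx : x ∈ ball p r)
    (hy : y ∈ ball p r) : HasContinuousLogOn (fun z => (z - x) / (z - y)) (ball p r)ᶜ := by
  have hsub : ∀ z ∈ (ball p r)ᶜ, ∀ w ∈ ball p r, z - w ≠ 0 := fun z hz w hw =>
    sub_ne_zero.2 fun hzw => hz (hzw ▸ hw)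
  have hp : p ∈ ball p r := mem_ball_self (pos_of_mem_ball hx)
  have hcenter : ∀ w ∈ ball p r,
      HasContinuousLogOn (fun z => (z - w) / (z - p)) (ball p r)ᶜ := by
    intro w hw
    refine (HasContinuousLogOn.const one_ne_zero).of_norm_sub_lt
      (ContinuousOn.div (by fun_prop) (by fun_prop) fun z hz => hsub z hz p hp) fun z hz => ?_
    have hzp : z - p ≠ 0 := hsub z hz p hp
    rw [div_sub_one hzp, sub_sub_sub_cancel_left, norm_div, norm_one,
      div_lt_one (norm_pos_iff.2 hzp), ← dist_eq_norm, ← dist_eq_norm, dist_comm]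
    exact (mem_ball.1 hw).trans_le (not_lt.1 hz)
  refine ((hcenter x hx).div (hcenter y hy)).congr fun z hz =>
    (div_div_div_cancel_right₀ (hsub z hz p hp) _ _).symm

theorem not_hasContinuousLogOn_sub_sphere (x : ℂ) {ρ : ℝ} (hρ : 0 < ρ) :
    ¬ HasContinuousLogOn (fun z => z - x) (sphere x ρ) := by
  rintro ⟨L, hL, hexp⟩
  have hmem : ∀ θ, circleMap x ρ θ ∈ sphere x ρ := circleMap_mem_sphere x hρ.le
  have hconst := sub_eq_sub_of_exp_eq_exp isPreconnected_univ
    (l := fun θ : ℝ => L (circleMap x ρ θ)) (m := fun θ : ℝ => Complex.log ρ + θ * Complex.I)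
    (hL.comp_continuous (continuous_circleMap x ρ) hmem).continuousOn (by fun_prop)
    (fun θ _ => by
      rw [hexp _ (hmem θ), Complex.exp_add, Complex.exp_log (by exact_mod_cast hρ.ne')]
      simp [circleMap])
    (mem_univ 0) (mem_univ (2 * Real.pi))
  have hperiod : circleMap x ρ (2 * Real.pi) = circleMap x ρ 0 := by
    simpa using periodic_circleMap x ρ 0
  have hzero : (2 * Real.pi * Complex.I : ℂ) = 0 := by
    rw [hperiod] at hconst
    push_cast at hconst
    linear_combination hconst
  exact Complex.two_pi_I_ne_zero hzero

theorem exists_eq_zero_of_eqOn_sub_compl {H : ℂ → ℂ} (hH : Continuous H) {A : Set ℂ}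
    (hA : Bornology.IsBounded A) {x : ℂ} (hHA : EqOn H (fun z => z - x) Aᶜ) : ∃ z, H z = 0 := by
  by_contra! h0
  obtain ⟨ρ, hρ, hAρ⟩ := hA.subset_ball_lt 0 x
  refine not_hasContinuousLogOn_sub_sphere x hρ <|
    ((HasContinuousLogOn.of_convex convex_univ hH.continuousOn fun z _ => h0 z).mono
      (subset_univ _)).congr fun z hz => (hHA fun hzA => ?_).symm
  exact (mem_sphere.1 hz).not_lt (hAρ hzA)

theorem closure_connectedComponentIn_inter_subset {X : Type*} [TopologicalSpace X]
    [LocallyConnectedSpace X] {O : Set X} (hO : IsOpen O) (x : X) :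
    closure (connectedComponentIn O x) ∩ O ⊆ connectedComponentIn O x := by
  rintro z ⟨hz, hzO⟩
  obtain ⟨w, hwz, hwx⟩ := mem_closure_iff.1 hz _ hO.connectedComponentIn
    (mem_connectedComponentIn hzO)
  rw [connectedComponentIn_eq hwx, ← connectedComponentIn_eq hwz]
  exact mem_connectedComponentIn hzO

theorem frontier_connectedComponentIn_subset {X : Type*} [TopologicalSpace X]
    [LocallyConnectedSpace X] {O : Set X} (hO : IsOpen O) (x : X) :
    frontier (connectedComponentIn O x) ⊆ Oᶜ := by
  intro z hz hzO
  rw [hO.connectedComponentIn.frontier_eq] at hz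
  exact hz.2 (closure_connectedComponentIn_inter_subset hO x ⟨hz.1, hzO⟩)

variable {K : Set ℂ} {x y : ℂ}

/- If `y` lay outside the bounded component `C` of `x`, extending the logarithm `L` of
`(z - x) / (z - y)` from `K` and taking `exp L * (z - y)` on `C`, `z - x` elsewhere, would give a
zero-free map equal to `z - x` near infinity. -/
theorem mem_connectedComponentIn_compl_of_isBounded (hK : IsCompact K)
    (hlog : HasContinuousLogOn (fun z => (z - x) / (z - y)) K)
    (hbdd : Bornology.IsBounded (connectedComponentIn Kᶜ x)) :
    y ∈ connectedComponentIn Kᶜ x := by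
  classical
  by_contra hyC
  have hne : ∀ z ∈ K, (z - x) / (z - y) ≠ 0 := fun z hz => hlog.ne_zero hz
  obtain ⟨L, hL, hexp⟩ := hlog
  obtain ⟨G, hG⟩ := ContinuousMap.exists_restrict_eq hK.isClosed ⟨K.domRestrict L, hL.domRestrict⟩
  have hGL : EqOn G L K := fun z hz => congrArg (fun g : C(K, ℂ) => g ⟨z, hz⟩) hG
  have hxC : x ∈ connectedComponentIn Kᶜ x :=
    mem_connectedComponentIn fun hxK => hne x hxK (by simp)
  set H : ℂ → ℂ := (connectedComponentIn Kᶜ x).piecewise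
    (fun z => Complex.exp (G z) * (z - y)) (fun z => z - x) with hH
  have hHcont : Continuous H := by
    refine Continuous.piecewise (fun z hz => ?_) (by fun_prop) (by fun_prop)
    have hzK : z ∈ K :=
      not_not.1 (frontier_connectedComponentIn_subset hK.isClosed.isOpen_compl x hz)
    rw [hGL hzK, hexp z hzK, div_mul_cancel₀ _ (div_ne_zero_iff.1 (hne z hzK)).2]
  obtain ⟨z, hz⟩ := exists_eq_zero_of_eqOn_sub_compl hHcont hbdd (piecewise_eqOn_compl _ _ _)
  by_cases hzC : z ∈ connectedComponentIn Kᶜ x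
  · rw [hH, piecewise_eq_of_mem _ _ _ hzC, mul_eq_zero, sub_eq_zero] at hz
    exact hyC (hz.resolve_left (Complex.exp_ne_zero _) ▸ hzC)
  · rw [hH, piecewise_eq_of_notMem _ _ _ hzC, sub_eq_zero] at hz
    exact hzC (hz ▸ hxC)

theorem isPreconnected_compl_closedBall {E : Type*} [NormedAddCommGroup E] [NormedSpace ℝ E]
    (hE : 1 < Module.rank ℝ E) (R : ℝ) : IsPreconnected (closedBall (0 : E) R)ᶜ := by
  rcases lt_or_ge R 0 with hR | hR
  · rw [closedBall_eq_empty.2 hR, compl_empty]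
    exact (convex_univ (𝕜 := ℝ)).isPreconnected
  have himage : (closedBall (0 : E) R)ᶜ =
      (fun v : ℝ × E => v.1 • v.2) '' (Ioi R ×ˢ sphere 0 1) := by
    ext z
    simp only [mem_compl_iff, mem_closedBall_zero_iff, not_le, mem_image, Prod.exists, mem_prod,
      mem_Ioi, mem_sphere_zero_iff_norm]
    refine ⟨fun hz => ⟨‖z‖, ‖z‖⁻¹ • z, ⟨hz, ?_⟩, ?_⟩, ?_⟩
    · rw [norm_smul, norm_inv, norm_norm, inv_mul_cancel₀ (hR.trans_lt hz).ne']
    · rw [smul_inv_smul₀ (hR.trans_lt hz).ne']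
    · rintro ⟨t, v, ⟨ht, hv⟩, rfl⟩
      rwa [norm_smul, hv, mul_one, Real.norm_of_nonneg (hR.trans ht.le)]
  rw [himage]
  exact (isPreconnected_Ioi.prod (isPreconnected_sphere hE 0 1)).image _ (by fun_prop)

theorem connectedComponentIn_compl_eq_of_not_isBounded {E : Type*} [NormedAddCommGroup E]
    [NormedSpace ℝ E] (hE : 1 < Module.rank ℝ E) {K : Set E} (hK : Bornology.IsBounded K) {x y : E}
    (hx : ¬ Bornology.IsBounded (connectedComponentIn Kᶜ x))
    (hy : ¬ Bornology.IsBounded (connectedComponentIn Kᶜ y)) :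
    connectedComponentIn Kᶜ x = connectedComponentIn Kᶜ y := by
  obtain ⟨R, hR⟩ := hK.subset_closedBall 0
  have hfar : ∀ w, ¬ Bornology.IsBounded (connectedComponentIn Kᶜ w) →
      ∃ z ∈ connectedComponentIn Kᶜ w, z ∈ (closedBall (0 : E) R)ᶜ := fun w hw => by
    by_contra! hnear
    exact hw (isBounded_closedBall.subset fun z hz => not_not.1 (hnear z hz))
  obtain ⟨z, hzx, hzR⟩ := hfar x hx
  obtain ⟨w, hwy, hwR⟩ := hfar y hy
  rw [connectedComponentIn_eq hzx, connectedComponentIn_eq hwy]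
  exact connectedComponentIn_eq ((isPreconnected_compl_closedBall hE R).subset_connectedComponentIn
    hzR (compl_subset_compl.2 hR) hwR)

theorem mem_connectedComponentIn_compl_of_hasContinuousLogOn (hK : IsCompact K)
    (hlog : HasContinuousLogOn (fun z => (z - x) / (z - y)) K) :
    y ∈ connectedComponentIn Kᶜ x := by
  have hy : y ∈ connectedComponentIn Kᶜ y :=
    mem_connectedComponentIn fun hyK => hlog.ne_zero hyK (by simp)
  by_cases hbx : Bornology.IsBounded (connectedComponentIn Kᶜ x)
  · exact mem_connectedComponentIn_compl_of_isBounded hK hlog hbx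
  by_cases hby : Bornology.IsBounded (connectedComponentIn Kᶜ y)
  · have hlog' : HasContinuousLogOn (fun z => (z - y) / (z - x)) K :=
      ((HasContinuousLogOn.const one_ne_zero).div hlog).congr fun z _ => (one_div_div _ _).symm
    rw [← connectedComponentIn_eq (mem_connectedComponentIn_compl_of_isBounded hK hlog' hby)]
    exact hy
  · rw [connectedComponentIn_compl_eq_of_not_isBounded (by simp) hK.isBounded hbx hby]
    exact hy

end Eilenberg

section Accessibility

theorem connectedComponentIn_compl_subset_of_disjoint_closure {X : Type*} [TopologicalSpace X]
    [LocallyConnectedSpace X] {K K' : Set X} (hK : IsClosed K) (hK' : K' ⊆ K) {x : X} (hx : x ∉ K)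
    (hdisj : Disjoint (closure (connectedComponentIn Kᶜ x)) (K \ K')) :
    connectedComponentIn K'ᶜ x ⊆ connectedComponentIn Kᶜ x := by
  refine isPreconnected_connectedComponentIn.subset_left_of_subset_union
    hK.isOpen_compl.connectedComponentIn (isClosed_closure.isOpen_compl)
    (disjoint_compl_right.mono_left subset_closure) (fun z hz => ?_)
    ⟨x, mem_connectedComponentIn fun hxK' => hx (hK' hxK'), mem_connectedComponentIn hx⟩
  refine or_iff_not_imp_right.2 fun hzC => ?_
  rw [mem_compl_iff, not_not] at hzC
  exact closure_connectedComponentIn_inter_subset hK.isOpen_compl x ⟨hzC, fun hzK =>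
    hdisj.le_bot ⟨hzC, hzK, connectedComponentIn_subset _ _ hz⟩⟩

variable {Q : Set ℂ} {α : ℝ → ℂ} {a b c : ℝ} {r : ℝ} {x : ℂ}

theorem hasContinuousLogOn_sub_div_sub_image_Icc (hα : ContinuousOn α (Icc a b))
    (hinj : InjOn α (Icc a b)) {y : ℂ} (hx : x ∉ α '' Icc a b) (hy : y ∉ α '' Icc a b) :
    HasContinuousLogOn (fun z => (z - x) / (z - y)) (α '' Icc a b) := by
  have hne : ∀ w ∉ α '' Icc a b, ∀ t ∈ Icc a b, α t - w ≠ 0 := fun w hw t ht =>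
    sub_ne_zero.2 fun hαw => hw ⟨t, ht, hαw⟩
  exact .image_of_injOn isCompact_Icc hα hinj <| .of_convex (convex_Icc a b)
    ((hα.sub continuousOn_const).div (hα.sub continuousOn_const) (hne y hy))
    fun t ht => div_ne_zero (hne x hx t ht) (hne y hy t ht)

theorem hasContinuousLogOn_sub_div_sub_union_punctured_arc (hQ : IsClosed Q)
    (hα : ContinuousOn α (Icc a b)) (hinj : InjOn α (Icc a b)) (hc : c ∈ Ioo a b)
    (hQα : Disjoint Q (α '' Ioo a b)) (hQr : Disjoint Q (ball (α c) r)) (hx : x ∈ ball (α c) r)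
    (hxα : x ∉ α '' Icc a b) {s t : ℝ} (hs : s < c) (ht : c < t) :
    HasContinuousLogOn (fun z => (z - x) / (z - α c)) (Q ∪ α '' Icc a s ∪ α '' Icc t b) := by
  have hsub : Icc a s ⊆ Icc a b := Icc_subset_Icc_right (hs.trans hc.2).le
  have htub : Icc t b ⊆ Icc a b := Icc_subset_Icc_left (hc.1.trans ht).le
  have hcs : α c ∉ α '' Icc a s := fun h =>
    hs.not_ge ((hinj.mem_image_iff hsub (Ioo_subset_Icc_self hc)).1 h).2
  have hct : α c ∉ α '' Icc t b := fun h =>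
    ht.not_ge ((hinj.mem_image_iff htub (Ioo_subset_Icc_self hc)).1 h).1
  have hend : ∀ u ∈ Icc a b, α u ∈ Q → u = a ∨ u = b := fun u hu huQ => by
    by_contra! hne
    exact hQα.le_bot ⟨huQ, u, ⟨hu.1.lt_of_ne' hne.1, hu.2.lt_of_ne hne.2⟩, rfl⟩
  have hleft : Q ∩ α '' Icc a s ⊆ {α a} := by
    rintro _ ⟨huQ, u, hu, rfl⟩
    have hua : u = a := (hend u (hsub hu) huQ).resolve_right
      (hu.2.trans_lt (hs.trans hc.2)).ne
    exact congrArg α hua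
  have hright : (Q ∪ α '' Icc a s) ∩ α '' Icc t b ⊆ {α b} := by
    rintro _ ⟨huQ | ⟨v, hv, hvu⟩, u, hu, rfl⟩
    · have hub : u = b := (hend u (htub hu) huQ).resolve_left ((hc.1.trans ht).trans_le hu.1).ne'
      exact congrArg α hub
    · have hvu' := hinj (hsub hv) (htub hu) hvu
      linarith [hv.2, hu.1]
  have hleftClosed := (isCompact_Icc.image_of_continuousOn (hα.mono hsub)).isClosed
  have hrightClosed := (isCompact_Icc.image_of_continuousOn (hα.mono htub)).isClosed
  have hlogQ : HasContinuousLogOn (fun z => (z - x) / (z - α c)) Q :=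
    (hasContinuousLogOn_sub_div_sub_compl_ball hx (mem_ball_self (pos_of_mem_ball hx))).mono
      hQr.subset_compl_right
  refine .union (hQ.union hleftClosed) hrightClosed
    (subsingleton_singleton.anti hright).isPreconnected
    (.union hQ hleftClosed (subsingleton_singleton.anti hleft).isPreconnected hlogQ ?_) ?_
  · exact hasContinuousLogOn_sub_div_sub_image_Icc (hα.mono hsub) (hinj.mono hsub)
      (fun h => hxα (image_mono hsub h)) hcs
  · exact hasContinuousLogOn_sub_div_sub_image_Icc (hα.mono htub) (hinj.mono htub)
      (fun h => hxα (image_mono htub h)) hct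

/- Otherwise a small subarc around `α c` could be removed without changing the component of `x`,
but by Eilenberg's criterion the component would then contain `α c`. -/
theorem mem_closure_connectedComponentIn_of_arc (hQ : IsCompact Q)
    (hα : ContinuousOn α (Icc a b)) (hinj : InjOn α (Icc a b)) (hc : c ∈ Ioo a b)
    (hQα : Disjoint Q (α '' Ioo a b)) (hQr : Disjoint Q (ball (α c) r)) (hx : x ∈ ball (α c) r)
    (hxα : x ∉ α '' Icc a b) :
    α c ∈ closure (connectedComponentIn (Q ∪ α '' Icc a b)ᶜ x) := by
  by_contra hfar
  have hc' : c ∈ Icc a b := Ioo_subset_Icc_self hc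
  obtain ⟨s, t, ⟨hs, ht⟩, hst⟩ := mem_nhds_iff_exists_Ioo_subset.1
    ((hα.continuousAt (Icc_mem_nhds hc.1 hc.2)).preimage_mem_nhds
      (isClosed_closure.isOpen_compl.mem_nhds hfar))
  set K' := Q ∪ α '' Icc a s ∪ α '' Icc t b
  have hsub : Icc a s ⊆ Icc a b := Icc_subset_Icc_right (hs.trans hc.2).le
  have htub : Icc t b ⊆ Icc a b := Icc_subset_Icc_left (hc.1.trans ht).le
  have hK'K : K' ⊆ Q ∪ α '' Icc a b := union_subset
    (union_subset_union_right Q (image_mono hsub)) ((image_mono htub).trans subset_union_right)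
  have hxK : x ∉ Q ∪ α '' Icc a b := fun h => h.elim (fun hxQ => hQr.le_bot ⟨hxQ, hx⟩) hxα
  have hK'c : IsCompact K' :=
    (hQ.union (isCompact_Icc.image_of_continuousOn (hα.mono hsub))).union
      (isCompact_Icc.image_of_continuousOn (hα.mono htub))
  have hcK'x : α c ∈ connectedComponentIn K'ᶜ x :=
    mem_connectedComponentIn_compl_of_hasContinuousLogOn hK'c
      (hasContinuousLogOn_sub_div_sub_union_punctured_arc hQ.isClosed hα hinj hc hQα hQr hx hxα
        hs ht)
  refine connectedComponentIn_subset _ _ (connectedComponentIn_compl_subset_of_disjoint_closure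
    (hQ.union (isCompact_Icc.image_of_continuousOn hα)).isClosed hK'K hxK ?_ hcK'x)
    (Or.inr (mem_image_of_mem α hc'))
  refine disjoint_right.2 ?_
  rintro _ ⟨hz | ⟨u, hu, rfl⟩, hzK'⟩
  · exact absurd (Or.inl (Or.inl hz)) hzK'
  · exact hst ⟨not_le.1 fun hus => hzK' (Or.inl (Or.inr ⟨u, ⟨hu.1, hus⟩, rfl⟩)),
      not_le.1 fun htu => hzK' (Or.inr ⟨u, ⟨htu, hu.2⟩, rfl⟩)⟩

end Accessibility

section Crossing

theorem arg_one_sub_ne_arg_one_add {u : ℂ} (hu : u.im ≠ 0) :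
    Complex.arg (1 - u) ≠ Complex.arg (1 + u) := by
  rcases hu.lt_or_gt with hneg | hpos
  · have hadd : Complex.arg (1 + u) < 0 := Complex.arg_neg_iff.2 (by simpa using hneg)
    have hsub : 0 ≤ Complex.arg (1 - u) := Complex.arg_nonneg_iff.2 (by simpa using hneg.le)
    exact (hadd.trans_le hsub).ne'
  · have hadd : 0 ≤ Complex.arg (1 + u) := Complex.arg_nonneg_iff.2 (by simpa using hpos.le)
    have hsub : Complex.arg (1 - u) < 0 := Complex.arg_neg_iff.2 (by simpa using hpos)
    exact (hsub.trans_le hadd).ne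

theorem log_one_sub_sub_log_one_sub_inv_ne {u : ℂ} (hu : ‖u‖ = 1) (him : u.im ≠ 0) :
    Complex.log (1 - u) - Complex.log (1 - u⁻¹) ≠
      Complex.log (1 + u) - Complex.log (1 + u⁻¹) := by
  have hconj : ∀ z : ℂ, z.im ≠ 0 → (Complex.log z - Complex.log (starRingEnd ℂ z)).im =
      2 * Complex.arg z := fun z hz => by
    have hπ : Complex.arg z ≠ Real.pi := fun h => hz (Complex.arg_eq_pi_iff.1 h).2
    rw [Complex.log_conj _ hπ, Complex.sub_im, Complex.conj_im, Complex.log_im]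
    ring
  have hsub : 1 - u⁻¹ = starRingEnd ℂ (1 - u) := by rw [Complex.inv_eq_conj hu, map_sub, map_one]
  have hadd : 1 + u⁻¹ = starRingEnd ℂ (1 + u) := by rw [Complex.inv_eq_conj hu, map_add, map_one]
  intro h
  have him_eq := congrArg Complex.im h
  rw [hsub, hadd, hconj _ (by simpa using him), hconj _ (by simpa using him)] at him_eq
  exact arg_one_sub_ne_arg_one_add him (mul_left_cancel₀ two_ne_zero him_eq)

theorem sub_eq_log_one_sub_div_sub_log_one_sub_div {X : Type*} [TopologicalSpace X] {S : Set X}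
    (hS : IsPreconnected S) {L g : X → ℂ} {k p : ℂ} (hL : ContinuousOn L S)
    (hg : ContinuousOn g S) (hp : ‖p‖ = 1) (hg1 : ∀ x ∈ S, ‖g x‖ ≤ 1)
    (hexp : ∀ x ∈ S, Complex.exp (L x) = k * (p - g x)) {x y : X} (hx : x ∈ S) (hy : y ∈ S) :
    L y - L x = Complex.log (1 - g y / p) - Complex.log (1 - g x / p) := by
  have hp0 : p ≠ 0 := norm_ne_zero_iff.1 (hp ▸ one_ne_zero)
  have hne : ∀ z ∈ S, k ≠ 0 ∧ p - g z ≠ 0 := fun z hz =>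
    mul_ne_zero_iff.1 (hexp z hz ▸ Complex.exp_ne_zero _)
  have hslit : ∀ z ∈ S, 1 - g z / p ∈ Complex.slitPlane := fun z hz => by
    refine one_sub_mem_slitPlane (by simpa [hp] using hg1 z hz) fun h => (hne z hz).2 ?_
    rw [(div_eq_one_iff_eq hp0).1 h, sub_self]
  have hexp' : ∀ z ∈ S, Complex.exp (L z) =
      Complex.exp (Complex.log (k * p) + Complex.log (1 - g z / p)) := fun z hz => by
    rw [hexp z hz, Complex.exp_add, Complex.exp_log (mul_ne_zero (hne z hz).1 hp0),
      Complex.exp_log (Complex.slitPlane_ne_zero (hslit z hz)), mul_assoc, mul_one_sub,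
      mul_div_cancel₀ _ hp0]
  have hconst := sub_eq_sub_of_exp_eq_exp hS
    (m := fun z => Complex.log (k * p) + Complex.log (1 - g z / p)) hL
    (continuousOn_const.add ((continuousOn_const.sub (hg.div_const p)).clog hslit)) hexp' hx hy
  linear_combination -hconst

/- If the paths were disjoint, `γ s - β t` would have a continuous logarithm on the parameter
rectangle. On each side it equals a constant times `1 - w` with `‖w‖ ≤ 1`, so the increments of the
logarithm along the four sides are explicit, and they do not add up to zero. -/
theorem exists_eq_of_interleaved_unit_circle {γ β : ℝ → ℂ} {a b c d : ℝ} (hab : a ≤ b)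
    (hcd : c ≤ d) (hβ : ContinuousOn β (Icc a b)) (hγ : ContinuousOn γ (Icc c d))
    (hβ1 : ∀ t ∈ Icc a b, ‖β t‖ ≤ 1) (hγ1 : ∀ s ∈ Icc c d, ‖γ s‖ ≤ 1) {u : ℂ} (hu : ‖u‖ = 1)
    (him : u.im ≠ 0) (hγc : γ c = 1) (hγd : γ d = -1) (hβa : β a = u⁻¹) (hβb : β b = u) :
    ∃ s ∈ Icc c d, ∃ t ∈ Icc a b, γ s = β t := by
  by_contra! hne
  have hγfst : ContinuousOn (fun v : ℝ × ℝ => γ v.1) (Icc c d ×ˢ Icc a b) :=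
    hγ.comp continuousOn_fst fun v hv => hv.1
  have hβsnd : ContinuousOn (fun v : ℝ × ℝ => β v.2) (Icc c d ×ˢ Icc a b) :=
    hβ.comp continuousOn_snd fun v hv => hv.2
  obtain ⟨L, hL, hexp⟩ := HasContinuousLogOn.of_convex
    ((convex_Icc c d).prod (convex_Icc a b)) (hγfst.sub hβsnd)
    fun v hv => sub_ne_zero.2 (hne v.1 hv.1 v.2 hv.2)
  have hc := left_mem_Icc.2 hcd
  have hd := right_mem_Icc.2 hcd
  have ha := left_mem_Icc.2 hab
  have hb := right_mem_Icc.2 hab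
  have hvertical : ∀ s ∈ Icc c d, ‖γ s‖ = 1 → L (s, b) - L (s, a) =
      Complex.log (1 - β b / γ s) - Complex.log (1 - β a / γ s) := fun s hs hnorm =>
    sub_eq_log_one_sub_div_sub_log_one_sub_div (k := 1) (L := fun t => L (s, t)) isPreconnected_Icc
      (hL.comp (by fun_prop) fun t ht => ⟨hs, ht⟩) hβ hnorm hβ1
      (fun t ht => by rw [hexp (s, t) ⟨hs, ht⟩, one_mul, Pi.sub_apply]) ha hb
  have hhorizontal : ∀ t ∈ Icc a b, ‖β t‖ = 1 → L (d, t) - L (c, t) =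
      Complex.log (1 - γ d / β t) - Complex.log (1 - γ c / β t) := fun t ht hnorm =>
    sub_eq_log_one_sub_div_sub_log_one_sub_div (k := -1) (L := fun s => L (s, t)) isPreconnected_Icc
      (hL.comp (by fun_prop) fun s hs => ⟨hs, ht⟩) hγ hnorm hγ1
      (fun s hs => by rw [hexp (s, t) ⟨hs, ht⟩, neg_one_mul, neg_sub, Pi.sub_apply]) hc hd
  have hleft := hvertical c hc (by simp [hγc])
  have hright := hvertical d hd (by simp [hγd])
  have hbottom := hhorizontal a ha (by simp [hβa, hu])
  have htop := hhorizontal b hb (by simp [hβb, hu])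
  simp only [hγc, hγd, hβa, hβb, div_one, div_neg, neg_div, one_div, inv_inv, sub_neg_eq_add]
    at hleft hright hbottom htop
  refine log_one_sub_sub_log_one_sub_inv_ne hu him ?_
  linear_combination (hleft - hright - hbottom + htop) / (-2)

theorem exists_eq_mul_inv_and_eq_mul_of_norm_eq {r : ℝ} (hr : 0 < r) {v₁ v₂ : ℂ} (hv₁ : ‖v₁‖ = r)
    (hv₂ : ‖v₂‖ = r) (hne : v₁ ≠ v₂) :
    ∃ w u : ℂ, ‖w‖ = r ∧ ‖u‖ = 1 ∧ u.im ≠ 0 ∧ v₁ = w * u⁻¹ ∧ v₂ = w * u := by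
  obtain ⟨w, hw⟩ := IsAlgClosed.exists_eq_mul_self (v₁ * v₂)
  have hwnorm : ‖w‖ = r := by
    have hsq := congrArg norm hw
    rw [norm_mul, norm_mul, hv₁, hv₂] at hsq
    exact ((mul_self_inj hr.le (norm_nonneg w)).1 hsq).symm
  have hw0 : w ≠ 0 := norm_pos_iff.1 (hwnorm ▸ hr)
  have hv₂0 : v₂ ≠ 0 := norm_pos_iff.1 (hv₂ ▸ hr)
  have hu : ‖v₂ / w‖ = 1 := by rw [norm_div, hv₂, hwnorm, div_self hr.ne']
  have hv₁u : v₁ = w * (v₂ / w)⁻¹ := by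
    rw [inv_div, mul_div_assoc', ← hw, mul_div_cancel_right₀ _ hv₂0]
  have hv₂u : v₂ = w * (v₂ / w) := (mul_div_cancel₀ v₂ hw0).symm
  refine ⟨w, v₂ / w, hwnorm, hu, fun him => hne ?_, hv₁u, hv₂u⟩
  rw [hv₁u, Complex.inv_eq_conj hu, Complex.conj_eq_iff_im.2 him, ← hv₂u]

theorem exists_not_joinedIn_closedBall_diff_of_arc {β : ℝ → ℂ} {a b r : ℝ} {p : ℂ} (hab : a ≤ b)
    (hr : 0 < r) (hβ : ContinuousOn β (Icc a b)) (hball : MapsTo β (Icc a b) (closedBall p r))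
    (ha : dist (β a) p = r) (hb : dist (β b) p = r) (hne : β a ≠ β b) :
    ∃ z₁ ∈ sphere p r \ {β a, β b}, ∃ z₂ ∈ sphere p r \ {β a, β b},
      ¬ JoinedIn (closedBall p r \ β '' Icc a b) z₁ z₂ := by
  rw [dist_eq_norm] at ha hb
  obtain ⟨w, u, hw, hu, him, hβa, hβb⟩ := exists_eq_mul_inv_and_eq_mul_of_norm_eq hr ha hb
    (sub_left_injective.ne hne)
  have hw0 : w ≠ 0 := norm_pos_iff.1 (hw ▸ hr)
  have hmem : ∀ e : ℂ, ‖e‖ = 1 → e.im = 0 → p + w * e ∈ sphere p r \ {β a, β b} := by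
    refine fun e he heim => ⟨by simp [he, hw], ?_⟩
    rintro (h | h)
    · rw [← h, add_sub_cancel_left, mul_right_inj' hw0] at hβa
      rw [hβa, Complex.inv_eq_conj hu, Complex.conj_im, neg_eq_zero] at heim
      exact him heim
    · rw [← mem_singleton_iff.1 h, add_sub_cancel_left, mul_right_inj' hw0] at hβb
      exact him (hβb ▸ heim)
  refine ⟨p + w * 1, hmem 1 (by simp) (by simp), p + w * -1, hmem (-1) (by simp) (by simp), ?_⟩
  rintro ⟨γ, hγ⟩
  have hnorm : ∀ z ∈ closedBall p r, ‖(z - p) / w‖ ≤ 1 := fun z hz => by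
    rw [norm_div, hw, div_le_one hr]
    exact mem_closedBall_iff_norm.1 hz
  have hγmem : ∀ s, γ.extend s ∈ closedBall p r \ β '' Icc a b := fun s =>
    hγ (projIcc 0 1 zero_le_one s)
  obtain ⟨s, -, t, ht, hst⟩ := exists_eq_of_interleaved_unit_circle hab zero_le_one
    (γ := fun s => (γ.extend s - p) / w) (β := fun t => (β t - p) / w)
    ((hβ.sub continuousOn_const).div_const w)
    ((γ.continuous_extend.sub continuous_const).div_const w).continuousOn
    (fun t ht => hnorm _ (hball ht)) (fun s _ => hnorm _ (hγmem s).1) hu him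
    (by simp [hw0]) (by simp [hw0]) (by rw [hβa, mul_div_cancel_left₀ _ hw0])
    (by rw [hβb, mul_div_cancel_left₀ _ hw0])
  exact (hγmem s).2 ⟨t, ht, (sub_left_injective ((div_left_inj' hw0).1 hst)).symm⟩

section NormedSpace

variable {E : Type*} [NormedAddCommGroup E] [NormedSpace ℝ E] {K : Set E} {p w z : E} {r : ℝ}

theorem exists_joinedIn_closedBall_diff_of_mem_sphere (hK : IsClosed K) (hr : r ≠ 0)
    (hz : z ∈ sphere p r) (hzK : z ∉ K) :
    ∃ x ∈ ball p r, x ∉ K ∧ JoinedIn (closedBall p r \ K) z x := by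
  obtain ⟨ρ, hρ, hρK⟩ := Metric.isOpen_iff.1 hK.isOpen_compl z hzK
  have hzr : z ∈ closedBall p r := sphere_subset_closedBall hz
  obtain ⟨x, hxρ, hxr⟩ := mem_closure_iff.1 (closure_ball p hr ▸ hzr) _ isOpen_ball
    (mem_ball_self hρ)
  have hxr' : x ∈ closedBall p r := ball_subset_closedBall hxr
  have hjoin := (((convex_ball z ρ).inter (convex_closedBall p r)).isPathConnected
    ⟨x, hxρ, hxr'⟩).joinedIn z ⟨mem_ball_self hρ, hzr⟩ x ⟨hxρ, hxr'⟩
  exact ⟨x, hxr, hρK hxρ, hjoin.mono fun v hv => ⟨hv.2, hρK hv.1⟩⟩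

theorem joinedIn_closedBall_diff_of_mem_connectedComponentIn (hK : IsClosed K) (hz : z ∈ ball p r)
    (hw : w ∈ connectedComponentIn (sphere p r ∪ K)ᶜ z) : JoinedIn (closedBall p r \ K) z w := by
  set C := connectedComponentIn (sphere p r ∪ K)ᶜ z
  have hzC : z ∈ C := mem_connectedComponentIn (connectedComponentIn_nonempty_iff.1 ⟨w, hw⟩)
  have hCcompl : C ⊆ (sphere p r ∪ K)ᶜ := connectedComponentIn_subset _ _
  have hCball : C ⊆ ball p r := by
    refine isPreconnected_connectedComponentIn.subset_left_of_subset_union isOpen_ball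
      isClosed_closedBall.isOpen_compl (disjoint_compl_right.mono_left ball_subset_closedBall)
      (fun v hv => ?_) ⟨z, hzC, hz⟩
    rcases lt_trichotomy (dist v p) r with hlt | heq | hgt
    · exact Or.inl hlt
    · exact absurd (Or.inl heq) (hCcompl hv)
    · exact Or.inr (not_le.2 hgt)
  have hCopen : IsOpen C := (isClosed_sphere.union hK).isOpen_compl.connectedComponentIn
  have hCpath := hCopen.isConnected_iff_isPathConnected.1
    ⟨⟨z, hzC⟩, isPreconnected_connectedComponentIn⟩
  exact (hCpath.joinedIn z hzC w hw).mono fun v hv =>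
    ⟨ball_subset_closedBall (hCball hv), fun hvK => hCcompl hv (Or.inr hvK)⟩

end NormedSpace

theorem exists_separated_of_chord {α : ℝ → ℂ} {a b r : ℝ} {p : ℂ} (hab : a ≤ b) (hr : 0 < r)
    (hα : ContinuousOn α (Icc a b)) (ha : dist (α a) p = r) (hb : dist (α b) p = r)
    (hne : α a ≠ α b) (hin : MapsTo α (Ioo a b) (ball p r)) :
    ∃ x ∈ ball p r, ∃ y ∈ ball p r, x ∉ α '' Icc a b ∧ y ∉ α '' Icc a b ∧
      y ∉ connectedComponentIn (sphere p r ∪ α '' Icc a b)ᶜ x := by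
  have hends : ∀ t ∈ Icc a b, t = a ∨ t = b ∨ α t ∈ ball p r := fun t ht => by
    rcases eq_endpoints_or_mem_Ioo_of_mem_Icc ht with h | h | h
    exacts [Or.inl h, Or.inr (Or.inl h), Or.inr (Or.inr (hin h))]
  have hball : MapsTo α (Icc a b) (closedBall p r) := fun t ht => by
    rcases hends t ht with rfl | rfl | h
    exacts [ha.le, hb.le, ball_subset_closedBall h]
  have hclosed : IsClosed (α '' Icc a b) := (isCompact_Icc.image_of_continuousOn hα).isClosed
  have hsphere : ∀ z ∈ sphere p r \ {α a, α b}, z ∉ α '' Icc a b := by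
    rintro _ ⟨hz, hzab⟩ ⟨t, ht, rfl⟩
    rcases hends t ht with rfl | rfl | h
    exacts [hzab (Or.inl rfl), hzab (Or.inr rfl), (mem_ball.1 h).ne hz]
  obtain ⟨z₁, hz₁, z₂, hz₂, hnot⟩ :=
    exists_not_joinedIn_closedBall_diff_of_arc hab hr hα hball ha hb hne
  obtain ⟨x, hx, hxα, hzx⟩ := exists_joinedIn_closedBall_diff_of_mem_sphere hclosed hr.ne' hz₁.1
    (hsphere z₁ hz₁)
  obtain ⟨y, hy, hyα, hzy⟩ := exists_joinedIn_closedBall_diff_of_mem_sphere hclosed hr.ne' hz₂.1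
    (hsphere z₂ hz₂)
  exact ⟨x, hx, y, hy, hxα, hyα, fun hxy => hnot ((hzx.trans
    (joinedIn_closedBall_diff_of_mem_connectedComponentIn hclosed hx hxy)).trans hzy.symm)⟩

end Crossing

section SeparatedArc

variable {α : ℝ → ℂ} {a b c r : ℝ}

theorem exists_first_mem_Ioc_eq {h : ℝ → ℝ} {e : ℝ} (hce : c ≤ e)
    (hh : ContinuousOn h (Icc c e)) (hc : h c < r) (he : r ≤ h e) :
    ∃ t ∈ Ioc c e, h t = r ∧ ∀ s ∈ Ico c t, h s < r := by
  obtain ⟨t, ⟨ht, hrt⟩, hmin⟩ := (isCompact_Icc.of_isClosed_subset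
    (hh.preimage_isClosed_of_isClosed isClosed_Icc isClosed_Ici) inter_subset_left).exists_isLeast
    (⟨e, right_mem_Icc.2 hce, he⟩ : (Icc c e ∩ h ⁻¹' Ici r).Nonempty)
  have hbelow : ∀ s ∈ Ico c t, h s < r := fun s hs => not_le.1 fun hrs =>
    hs.2.not_ge (hmin ⟨⟨hs.1, hs.2.le.trans ht.2⟩, hrs⟩)
  have hct : c < t := ht.1.lt_of_ne fun hct => (hct ▸ hc).not_ge hrt
  obtain ⟨s, hs, hsr⟩ := intermediate_value_Icc ht.1 (hh.mono (Icc_subset_Icc_right ht.2))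
    ⟨hc.le, hrt⟩
  have hst : s = t := hs.2.eq_of_not_lt fun hlt => (hbelow s ⟨hs.1, hlt⟩).ne hsr
  exact ⟨t, ⟨hct, ht.2⟩, hst ▸ hsr, hbelow⟩

theorem exists_chord_of_le_dist {M : Type*} [PseudoMetricSpace M] {α : ℝ → M} {p : M}
    (hα : ContinuousOn α (Icc a b)) (hc : c ∈ Icc a b) (hcr : dist (α c) p < r)
    (ha : r ≤ dist (α a) p) (hb : r ≤ dist (α b) p) :
    ∃ a' ∈ Ico a c, ∃ b' ∈ Ioc c b, dist (α a') p = r ∧ dist (α b') p = r ∧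
      MapsTo α (Ioo a' b') (ball p r) := by
  have hdist : ContinuousOn (fun t => dist (α t) p) (Icc a b) := by fun_prop
  obtain ⟨b', hb', hb'r, hright⟩ := exists_first_mem_Ioc_eq hc.2
    (hdist.mono (Icc_subset_Icc_left hc.1)) hcr hb
  obtain ⟨t, ht, htr, hleft⟩ := exists_first_mem_Ioc_eq (h := fun t => dist (α (-t)) p)
    (neg_le_neg hc.1) (hdist.comp continuousOn_neg fun t ht =>
      ⟨le_neg_of_le_neg ht.2, (neg_le.1 ht.1).trans hc.2⟩) (by rwa [neg_neg]) (by rwa [neg_neg])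
  refine ⟨-t, ⟨le_neg_of_le_neg ht.2, neg_lt.1 ht.1⟩, b', hb', htr, hb'r, fun s hs => ?_⟩
  rcases le_total c s with hcs | hsc
  · exact hright s ⟨hcs, hs.2⟩
  · simpa only [neg_neg, mem_ball] using hleft (-s) ⟨neg_le_neg hsc, neg_lt.1 hs.1⟩

theorem exists_separated_of_chord_near {ρ : ℝ} (hc : c ∈ Ioo a b) (hα : ContinuousOn α (Icc a b))
    (hinj : InjOn α (Icc a b)) (ha : dist (α a) (α c) = r) (hb : dist (α b) (α c) = r)
    (hin : MapsTo α (Ioo a b) (ball (α c) r)) (hρ : 0 < ρ) :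
    ∃ x ∈ ball (α c) ρ, ∃ y ∈ ball (α c) ρ, x ∉ sphere (α c) r ∪ α '' Icc a b ∧
      y ∉ sphere (α c) r ∪ α '' Icc a b ∧
      y ∉ connectedComponentIn (sphere (α c) r ∪ α '' Icc a b)ᶜ x := by
  set K := sphere (α c) r ∪ α '' Icc a b
  have hab : a < b := hc.1.trans hc.2
  have hball : Disjoint (sphere (α c) r) (ball (α c) r) := sphere_disjoint_ball
  have hnear : ∀ z ∈ ball (α c) r, z ∉ α '' Icc a b →
      ∃ w ∈ ball (α c) ρ, w ∈ connectedComponentIn Kᶜ z := fun z hz hzα => by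
    obtain ⟨w, hwρ, hwz⟩ := mem_closure_iff.1 (mem_closure_connectedComponentIn_of_arc
      (isCompact_sphere (α c) r) hα hinj hc (hball.mono_right hin.image_subset) hball hz hzα)
      _ isOpen_ball (mem_ball_self hρ)
    exact ⟨w, hwρ, hwz⟩
  obtain ⟨x₀, hx₀, y₀, hy₀, hx₀α, hy₀α, hsep⟩ := exists_separated_of_chord hab.le
    (pos_of_mem_ball (hin hc)) hα ha hb
    (hinj.ne (left_mem_Icc.2 hab.le) (right_mem_Icc.2 hab.le) hab.ne) hin
  obtain ⟨x, hxρ, hx⟩ := hnear x₀ hx₀ hx₀α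
  obtain ⟨y, hyρ, hy⟩ := hnear y₀ hy₀ hy₀α
  refine ⟨x, hxρ, y, hyρ, connectedComponentIn_subset _ _ hx, connectedComponentIn_subset _ _ hy,
    fun hxy => hsep ?_⟩
  rw [connectedComponentIn_eq hx, connectedComponentIn_eq hxy, ← connectedComponentIn_eq hy]
  exact mem_connectedComponentIn fun h => h.elim (fun hyr => hball.le_bot ⟨hyr, hy₀⟩) hy₀α

theorem exists_not_hasContinuousLogOn_of_chord {X : Type*} [TopologicalSpace X]
    {φ : X → ℂ} {e : ℝ → X} {B : Set X} (hφ : Continuous φ) (hc : c ∈ Ioo a b)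
    (he : ContinuousOn e (Icc a b)) (hinj : InjOn (φ ∘ e) (Icc a b)) (hBc : IsCompact B)
    (hB : IsPreconnected B) (hcover : e '' Icc a b ∪ B = univ) (haB : e a ∈ B) (hbB : e b ∈ B)
    (hdisj : Disjoint (φ '' B) (φ ∘ e '' Ioo a b)) (ha : dist (φ (e a)) (φ (e c)) = r)
    (hb : dist (φ (e b)) (φ (e c)) = r) (hin : MapsTo (φ ∘ e) (Ioo a b) (ball (φ (e c)) r)) :
    ∃ x ∉ range φ, φ (e c) ∈ closure (connectedComponentIn (range φ)ᶜ x) ∧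
      ¬ HasContinuousLogOn (fun w => φ w - x) univ := by
  have hα : ContinuousOn (φ ∘ e) (Icc a b) := hφ.comp_continuousOn he
  have hφB : IsCompact (φ '' B) := hBc.image hφ
  have hrange : range φ = φ '' B ∪ φ ∘ e '' Icc a b := by
    rw [← image_univ, ← hcover, image_union, image_comp, union_comm]
  obtain ⟨ρ, hρ, hball⟩ := Metric.isOpen_iff.1 hφB.isClosed.isOpen_compl (φ (e c))
    fun h => hdisj.le_bot ⟨h, c, hc, rfl⟩
  have hρB : Disjoint (φ '' B) (ball (φ (e c)) ρ) := disjoint_right.2 hball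
  have hρr : ρ ≤ r := not_lt.1 fun hlt => hball (mem_ball.2 (hb.trans_lt hlt)) ⟨e b, hbB, rfl⟩
  obtain ⟨x, hx, y, hy, hxK, hyK, hsep⟩ := exists_separated_of_chord_near hc hα hinj ha hb hin hρ
  by_contra! hcon
  have hlog_sub : ∀ z ∈ ball (φ (e c)) ρ, z ∉ sphere (φ (e c)) r ∪ φ ∘ e '' Icc a b →
      HasContinuousLogOn (fun w => φ w - z) univ := fun z hz hzK => by
    have hzα : z ∉ φ ∘ e '' Icc a b := fun h => hzK (Or.inr h)
    refine hcon z ?_ ?_ <;> rw [hrange]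
    · exact fun h => h.elim (hball hz) hzα
    · exact mem_closure_connectedComponentIn_of_arc hφB hα hinj hc hdisj hρB hz hzα
  have hlog : HasContinuousLogOn ((fun z => (z - x) / (z - y)) ∘ φ) (e '' Icc a b ∪ B) :=
    hcover ▸ (hlog_sub x hx hxK).div (hlog_sub y hy hyK)
  have hlog_compl : HasContinuousLogOn (fun z => (z - x) / (z - y))
      (sphere (φ (e c)) r ∪ φ '' B) :=
    (hasContinuousLogOn_sub_div_sub_compl_ball hx hy).mono (union_subset
      (fun z hz hzρ => hρr.not_gt (hz ▸ mem_ball.1 hzρ)) hρB.subset_compl_right)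
  have hsphere : e '' Icc a b ∩ φ ⁻¹' sphere (φ (e c)) r ⊆ B := by
    rintro _ ⟨⟨t, ht, rfl⟩, htr⟩
    rcases eq_endpoints_or_mem_Ioo_of_mem_Icc ht with rfl | rfl | ht'
    exacts [haB, hbB, absurd htr (mem_ball.1 (hin ht')).ne]
  have hlogK := HasContinuousLogOn.union_image_of_theta (isCompact_Icc.image_of_continuousOn he)
    hφ.continuousOn hinj.image_of_comp ⟨⟨_, haB⟩, hB⟩ isClosed_sphere hsphere hlog
    hlog_compl
  rw [← image_comp] at hlogK
  exact hsep (mem_connectedComponentIn_compl_of_hasContinuousLogOn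
    ((isCompact_sphere _ _).union (isCompact_Icc.image_of_continuousOn hα)) hlogK)

end SeparatedArc

section Circle

variable {a b : ℝ}

theorem image_circleExp_Icc_union_Icc (hab : a ≤ b) (hba : b ≤ a + 2 * Real.pi) :
    Circle.exp '' Icc a b ∪ Circle.exp '' Icc b (a + 2 * Real.pi) = univ := by
  rw [← image_union, Icc_union_Icc_eq_Icc hab hba,
    Circle.periodic_exp.image_Icc Real.two_pi_pos, Circle.exp_surjective.range_eq]

theorem disjoint_image_circleExp_Icc_image_circleExp_Ioo :
    Disjoint (Circle.exp '' Icc b (a + 2 * Real.pi)) (Circle.exp '' Ioo a b) := by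
  refine disjoint_left.2 ?_
  rintro _ ⟨s, hs, rfl⟩ ⟨t, ht, hst⟩
  have htb : t < b := ht.2
  have hts : t = s := Circle.exp_injOn_Ioc (add_sub_cancel_left a _).le
    ⟨ht.1, htb.le.trans (hs.1.trans hs.2)⟩ ⟨ht.1.trans (htb.trans_le hs.1), hs.2⟩ hst
  exact (hts ▸ htb).not_ge hs.1

theorem disjoint_image_image_circleExp {Y : Type*} {f : Circle → Y}
    (hinj : ∀ t ∈ Ioo a b, ∀ w, f w = f (Circle.exp t) → w = Circle.exp t) :
    Disjoint (f '' (Circle.exp '' Icc b (a + 2 * Real.pi))) (f ∘ Circle.exp '' Ioo a b) := by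
  refine disjoint_left.2 ?_
  rintro _ ⟨w, hw, rfl⟩ ⟨t, ht, htw⟩
  exact disjoint_image_circleExp_Icc_image_circleExp_Ioo.le_bot
    ⟨hw, t, ht, (hinj t ht w htw.symm).symm⟩

theorem injOn_comp_circleExp_Icc {Y : Type*} {f : Circle → Y} (hab : b - a < 2 * Real.pi)
    (hinj : ∀ t ∈ Icc a b, ∀ w, f w = f (Circle.exp t) → w = Circle.exp t) :
    InjOn (f ∘ Circle.exp) (Icc a b) := fun _ hs t ht hst =>
  Circle.exp_injOn_Icc hab hs ht (hinj t ht _ hst)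

theorem exists_forall_mem_Icc_circleExp {P : Circle → Prop} {q : Circle}
    (hq : ∀ᶠ w in nhds q, P w) :
    ∃ θ, Circle.exp θ = q ∧ ∃ ε ∈ Ioo 0 Real.pi,
      ∀ t ∈ Icc (θ - ε) (θ + ε), P (Circle.exp t) := by
  obtain ⟨θ, rfl⟩ := Circle.exp_surjective q
  obtain ⟨δ, hδ, hP⟩ := Metric.nhds_basis_closedBall.eventually_iff.1
    ((Circle.exp.continuous.tendsto θ).eventually hq)
  refine ⟨θ, rfl, min δ 1, ⟨lt_min hδ one_pos, (min_le_right _ _).trans_lt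
    (by linarith [Real.pi_gt_three])⟩, fun t ht => hP ?_⟩
  exact closedBall_subset_closedBall (min_le_left _ _) (Real.closedBall_eq_Icc ▸ ht)

theorem exists_not_hasContinuousLogOn_of_eventually_injective {φ : Circle → ℂ} (hφ : Continuous φ)
    {q : Circle} (hq : ∀ᶠ w in nhds q, ∀ w', φ w' = φ w → w' = w) :
    ∃ x ∉ range φ, φ q ∈ closure (connectedComponentIn (range φ)ᶜ x) ∧
      ¬ HasContinuousLogOn (fun w => φ w - x) univ := by
  obtain ⟨θ, rfl, ε, ⟨hε, hεπ⟩, hinj⟩ := exists_forall_mem_Icc_circleExp hq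
  have hinjOn := injOn_comp_circleExp_Icc (by linarith) hinj
  have hθ : θ ∈ Icc (θ - ε) (θ + ε) := ⟨by linarith, by linarith⟩
  have hleft : 0 < dist (φ (Circle.exp (θ - ε))) (φ (Circle.exp θ)) :=
    dist_pos.2 (hinjOn.ne (left_mem_Icc.2 (hθ.1.trans hθ.2)) hθ (by linarith))
  have hright : 0 < dist (φ (Circle.exp (θ + ε))) (φ (Circle.exp θ)) :=
    dist_pos.2 (hinjOn.ne (right_mem_Icc.2 (hθ.1.trans hθ.2)) hθ (by linarith))
  obtain ⟨a, ha, b, hb, har, hbr, hin⟩ := exists_chord_of_le_dist (α := φ ∘ Circle.exp)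
    (hφ.comp Circle.exp.continuous).continuousOn hθ ((dist_self _).trans_lt (lt_min hleft hright))
    (min_le_left _ _) (min_le_right _ _)
  have hsub : Icc a b ⊆ Icc (θ - ε) (θ + ε) := Icc_subset_Icc ha.1 hb.2
  have hab : a < b := ha.2.trans hb.1
  have hba : b ≤ a + 2 * Real.pi := by linarith [ha.1, hb.2]
  exact exists_not_hasContinuousLogOn_of_chord hφ (B := Circle.exp '' Icc b (a + 2 * Real.pi))
    ⟨ha.2, hb.1⟩ Circle.exp.continuous.continuousOn (hinjOn.mono hsub)
    (isCompact_Icc.image Circle.exp.continuous)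
    (isPreconnected_Icc.image _ Circle.exp.continuous.continuousOn)
    (image_circleExp_Icc_union_Icc hab.le hba)
    ⟨a + 2 * Real.pi, right_mem_Icc.2 hba, Circle.periodic_exp a⟩
    (mem_image_of_mem _ (left_mem_Icc.2 hba))
    (disjoint_image_image_circleExp fun t ht => hinj t (hsub (Ioo_subset_Icc_self ht)))
    har hbr hin

/- Otherwise two points of the injective arc would cut the space, just as they cut the circle. -/
theorem range_ne_univ_of_eventually_injective {M : Type*} [TopologicalSpace M] [T2Space M]
    {f : Circle → M} {q : Circle} (hM : ∀ u v : M, u ≠ v → IsPreconnected ({u, v}ᶜ : Set M))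
    (hf : Continuous f) (hq : ∀ᶠ w in nhds q, ∀ w', f w' = f w → w' = w) : range f ≠ univ := by
  intro hsurj
  obtain ⟨θ, rfl, ε, ⟨hε, hεπ⟩, hinj⟩ := exists_forall_mem_Icc_circleExp hq
  have hinjOn : InjOn (f ∘ Circle.exp) (Icc (θ - ε) (θ + ε)) :=
    injOn_comp_circleExp_Icc (by linarith) hinj
  have hne : ∀ {s t}, s ∈ Icc (θ - ε) (θ + ε) → t ∈ Icc (θ - ε) (θ + ε) → s ≠ t →
      f (Circle.exp s) ≠ f (Circle.exp t) := fun hs ht => hinjOn.ne hs ht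
  have hleft : θ - ε ∈ Icc (θ - ε) (θ + ε) := ⟨le_rfl, by linarith⟩
  have hmid : θ ∈ Icc (θ - ε) (θ + ε) := ⟨by linarith, by linarith⟩
  have hhalf : θ - ε / 2 ∈ Icc (θ - ε) (θ + ε) := ⟨by linarith, by linarith⟩
  have hright : θ + ε ∈ Icc (θ - ε) (θ + ε) := ⟨by linarith, le_rfl⟩
  have hclosed : ∀ s t, IsClosed (f '' (Circle.exp '' Icc s t)) := fun s t =>
    ((isCompact_Icc.image Circle.exp.continuous).image hf).isClosed
  obtain ⟨_, hends, ⟨_, ⟨t, ht, rfl⟩, rfl⟩, hB⟩ := isPreconnected_closed_iff.1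
    (hM _ _ (hne hleft hmid (by linarith)))
    (f '' (Circle.exp '' Icc (θ - ε) θ)) (f '' (Circle.exp '' Icc θ (θ - ε + 2 * Real.pi)))
    (hclosed _ _) (hclosed _ _) (by
      rw [← image_union, image_circleExp_Icc_union_Icc (by linarith) (by linarith), image_univ,
        hsurj]
      exact subset_univ _)
    ⟨f (Circle.exp (θ - ε / 2)), fun h => h.elim (hne hhalf hleft (by linarith))
      (hne hhalf hmid (by linarith)), _, ⟨_, ⟨by linarith, by linarith⟩, rfl⟩, rfl⟩
    ⟨f (Circle.exp (θ + ε)), fun h => h.elim (hne hright hleft (by linarith))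
      (hne hright hmid (by linarith)), _, ⟨_, ⟨by linarith, by linarith⟩, rfl⟩, rfl⟩
  rcases eq_endpoints_or_mem_Ioo_of_mem_Icc ht with rfl | rfl | ht'
  · exact hends (Or.inl rfl)
  · exact hends (Or.inr rfl)
  · exact (disjoint_image_image_circleExp fun s hs => hinj s
      ⟨hs.1.le, hs.2.le.trans hmid.2⟩).le_bot ⟨hB, t, ht', rfl⟩

end Circle

section WindingNumber

variable {X : Type*} [TopologicalSpace X] {φ : X → ℂ} {z z' : ℂ}

theorem HasContinuousLogOn.sub_of_dist_lt (hz : HasContinuousLogOn (fun w => φ w - z) univ)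
    (hφ : Continuous φ) (hzz' : ∀ w, dist z z' < dist (φ w) z) :
    HasContinuousLogOn (fun w => φ w - z') univ := by
  refine hz.of_norm_sub_lt (hφ.sub continuous_const).continuousOn fun w _ => ?_
  rw [sub_sub_sub_cancel_left, ← dist_eq_norm, ← dist_eq_norm]
  exact hzz' w

variable [CompactSpace X]

theorem isOpen_setOf_hasContinuousLogOn_sub (hφ : Continuous φ) :
    IsOpen {z | HasContinuousLogOn (fun w => φ w - z) univ} := by
  refine Metric.isOpen_iff.2 fun z hz => ?_
  obtain ⟨ε, hε, hball⟩ := Metric.isOpen_iff.1 (isCompact_range hφ).isClosed.isOpen_compl z (by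
    rintro ⟨w, rfl⟩
    exact hz.ne_zero (mem_univ w) (sub_self _))
  refine ⟨ε, hε, fun z' hz' => hz.sub_of_dist_lt hφ fun w => ?_⟩
  exact (mem_ball'.1 hz').trans_le (not_lt.1 fun hw => hball hw (mem_range_self w))

theorem isOpen_setOf_not_hasContinuousLogOn_sub_diff_range (hφ : Continuous φ) :
    IsOpen ({z | ¬ HasContinuousLogOn (fun w => φ w - z) univ} \ range φ) := by
  refine Metric.isOpen_iff.2 fun z ⟨hz, hzφ⟩ => ?_
  obtain ⟨ε, hε, hball⟩ := Metric.isOpen_iff.1 (isCompact_range hφ).isClosed.isOpen_compl z hzφ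
  refine ⟨ε / 2, half_pos hε, fun z' hz' => ⟨fun hlog => hz (hlog.sub_of_dist_lt hφ fun w => ?_),
    hball (ball_subset_ball (half_le_self hε.le) hz')⟩⟩
  have hw : ε ≤ dist (φ w) z := not_lt.1 fun hw => hball hw (mem_range_self w)
  linarith [mem_ball.1 hz', dist_triangle (φ w) z' z]

theorem isCompact_setOf_not_hasContinuousLogOn_sub (hφ : Continuous φ) :
    IsCompact {z | ¬ HasContinuousLogOn (fun w => φ w - z) univ} := by
  obtain ⟨R, hR⟩ := (isCompact_range hφ).isBounded.subset_closedBall 0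
  refine Metric.isCompact_of_isClosed_isBounded
    (isOpen_setOf_hasContinuousLogOn_sub hφ).isClosed_compl
    ((isBounded_closedBall (x := (0 : ℂ)) (r := max R 0)).subset fun z hz => ?_)
  by_contra hzR
  rw [mem_closedBall_zero_iff, not_le, max_lt_iff, norm_pos_iff] at hzR
  refine hz ((HasContinuousLogOn.const (neg_ne_zero.2 hzR.2)).of_norm_sub_lt
    (hφ.sub continuous_const).continuousOn fun w _ => ?_)
  rw [sub_neg_eq_add, sub_add_cancel, norm_neg]
  exact (mem_closedBall_zero_iff.1 (hR (mem_range_self w))).trans_lt hzR.1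

end WindingNumber

section Sphere

variable {X M : Type*} [TopologicalSpace X] [TopologicalSpace M]

theorem exists_continuous_comp_eq_of_range_subset {Y : Type*} [TopologicalSpace Y] {σ : Y → M}
    {f : X → M} (hσ : Topology.IsInducing σ) (hf : Continuous f) (hfσ : range f ⊆ range σ) :
    ∃ φ : X → Y, Continuous φ ∧ σ ∘ φ = f := by
  choose φ hφ using fun w => hfσ (mem_range_self w)
  exact ⟨φ, hσ.continuous_iff.2 (hf.congr fun w => (hφ w).symm), funext hφ⟩

theorem image_connectedComponentIn_of_isEmbedding {g : X → M} (hg : Topology.IsEmbedding g)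
    {s : Set X} {x : X} (hx : x ∈ s) :
    g '' connectedComponentIn s x = connectedComponentIn (g '' s) (g x) := by
  have hsub : connectedComponentIn (g '' s) (g x) ⊆ g '' s := connectedComponentIn_subset _ _
  refine (hg.continuous.continuousOn.image_connectedComponentIn_subset hx).antisymm ?_
  have himage : g '' (g ⁻¹' connectedComponentIn (g '' s) (g x)) =
      connectedComponentIn (g '' s) (g x) :=
    image_preimage_eq_of_subset (hsub.trans (image_subset_range g s))
  rw [← himage]
  refine image_mono (IsPreconnected.subset_connectedComponentIn ?_
    (mem_connectedComponentIn (mem_image_of_mem g hx)) ?_)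
  · rw [← hg.isInducing.isPreconnected_image, himage]
    exact isPreconnected_connectedComponentIn
  · exact (preimage_mono hsub).trans (preimage_image_eq s hg.injective).subset

theorem exists_isOpenEmbedding_complex_sphere {E : Type*} [NormedAddCommGroup E]
    [InnerProductSpace ℝ E] [Fact (Module.finrank ℝ E = 2 + 1)] (v : sphere (0 : E) 1) :
    ∃ σ : ℂ → sphere (0 : E) 1, Topology.IsOpenEmbedding σ ∧ range σ = {v}ᶜ := by
  have hemb := (stereographic' 2 v).symm.isOpenEmbedding (stereographic'_target v)
  refine ⟨_, hemb.comp Complex.orthonormalBasisOneI.repr.toHomeomorph.isOpenEmbedding, ?_⟩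
  rw [Complex.orthonormalBasisOneI.repr.toHomeomorph.surjective.range_comp, ← image_univ,
    ← stereographic'_target v, OpenPartialHomeomorph.symm_image_target_eq_source,
    stereographic'_source]

variable [T2Space M] {σ : ℂ → M}

theorem connectedComponentIn_compl_subset_image_not_hasContinuousLogOn [CompactSpace X]
    {φ : X → ℂ} {x : ℂ} (hσ : Topology.IsOpenEmbedding σ) (hφ : Continuous φ) (hxφ : x ∉ range φ)
    (hx : ¬ HasContinuousLogOn (fun w => φ w - x) univ) :
    connectedComponentIn (range (σ ∘ φ))ᶜ (σ x) ⊆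
      σ '' {z | ¬ HasContinuousLogOn (fun w => φ w - z) univ} := by
  set W := {z | ¬ HasContinuousLogOn (fun w => φ w - z) univ}
  have hσx : σ x ∉ range (σ ∘ φ) := by
    rwa [range_comp, hσ.injective.mem_set_image]
  have hWclosed : IsClosed (σ '' W) :=
    ((isCompact_setOf_not_hasContinuousLogOn_sub hφ).image hσ.continuous).isClosed
  refine Subset.trans ?_ (image_mono (sdiff_subset : W \ range φ ⊆ W))
  refine isPreconnected_connectedComponentIn.subset_left_of_subset_union
    (hσ.isOpenMap _ (isOpen_setOf_not_hasContinuousLogOn_sub_diff_range hφ))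
    hWclosed.isOpen_compl (disjoint_compl_right.mono_left (image_mono sdiff_subset))
    (fun y hy => ?_) ⟨σ x, mem_connectedComponentIn hσx, x, ⟨hx, hxφ⟩, rfl⟩
  by_cases hyW : y ∈ σ '' W
  · obtain ⟨z, hz, rfl⟩ := hyW
    refine Or.inl ⟨z, ⟨hz, fun ⟨w, hw⟩ => ?_⟩, rfl⟩
    exact connectedComponentIn_subset _ _ hy ⟨w, congrArg σ hw⟩
  · exact Or.inr hyW

theorem HasContinuousLogOn.comp_sub_of_notMem_range {D : Type*} [TopologicalSpace D]
    [SimplyConnectedSpace D] [LocallyPathConnectedSpace D] {Ψ : D → ℂ} {ι : X → D} {z : ℂ}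
    (hΨ : Continuous Ψ) (hι : Continuous ι) (hz : z ∉ range Ψ) :
    HasContinuousLogOn (fun w => Ψ (ι w) - z) univ :=
  (HasContinuousLogOn.of_simplyConnectedSpace (hΨ.sub continuous_const)
    fun w => sub_ne_zero.2 fun hw => hz ⟨w, hw⟩).comp hι.continuousOn (mapsTo_univ _ _)

theorem exists_mem_closure_connectedComponentIn_subset_image {φ : Circle → ℂ} {q : Circle}
    (hσ : Topology.IsOpenEmbedding σ) (hφ : Continuous φ)
    (hq : ∀ᶠ w in nhds q, ∀ w', φ w' = φ w → w' = w) :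
    ∃ y ∉ range (σ ∘ φ), σ (φ q) ∈ closure (connectedComponentIn (range (σ ∘ φ))ᶜ y) ∧
      connectedComponentIn (range (σ ∘ φ))ᶜ y ⊆
        σ '' {z | ¬ HasContinuousLogOn (fun w => φ w - z) univ} := by
  obtain ⟨x, hx, hxq, hxlog⟩ := exists_not_hasContinuousLogOn_of_eventually_injective hφ hq
  have himage : σ '' (range φ)ᶜ ⊆ (range (σ ∘ φ))ᶜ := by
    rw [range_comp]
    exact image_compl_subset hσ.injective
  refine ⟨σ x, himage (mem_image_of_mem σ hx), ?_,
    connectedComponentIn_compl_subset_image_not_hasContinuousLogOn hσ hφ hx hxlog⟩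
  refine closure_mono ?_ (image_closure_subset_closure_image hσ.continuous
    (mem_image_of_mem σ hxq))
  exact (hσ.continuous.continuousOn.image_connectedComponentIn_subset hx).trans
    (connectedComponentIn_mono _ himage)

theorem isPreconnected_compl_pair_sphere {E : Type*} [NormedAddCommGroup E]
    [InnerProductSpace ℝ E] [Fact (Module.finrank ℝ E = 2 + 1)] {u v : sphere (0 : E) 1}
    (huv : u ≠ v) : IsPreconnected ({u, v}ᶜ : Set (sphere (0 : E) 1)) := by
  obtain ⟨σ, hσ, hrange⟩ := exists_isOpenEmbedding_complex_sphere u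
  obtain ⟨z, rfl⟩ : v ∈ range σ := hrange ▸ huv.symm
  have himage : σ '' {z}ᶜ = {u, σ z}ᶜ := by
    rw [compl_eq_univ_sdiff, image_sdiff hσ.injective, image_univ, image_singleton, hrange,
      ← singleton_union, compl_union, sdiff_eq]
  exact himage ▸ (isConnected_compl_singleton_of_one_lt_rank (by simp) z).isPreconnected.image σ
    hσ.continuous.continuousOn

theorem exists_mem_closure_connectedComponentIn_subset_range {D E : Type*} [TopologicalSpace D]
    [SimplyConnectedSpace D] [LocallyPathConnectedSpace D] [NormedAddCommGroup E]
    [InnerProductSpace ℝ E] [Fact (Module.finrank ℝ E = 2 + 1)] {F : D → sphere (0 : E) 1}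
    {ι : Circle → D} {q : Circle} (hF : Continuous F) (hι : Continuous ι)
    (hq : ∀ᶠ w in nhds q, ∀ w', F (ι w') = F (ι w) → w' = w) :
    ∃ y ∉ range (F ∘ ι), F (ι q) ∈ closure (connectedComponentIn (range (F ∘ ι))ᶜ y) ∧
      connectedComponentIn (range (F ∘ ι))ᶜ y ⊆ range F := by
  have hFι : range (F ∘ ι) ⊆ range F := range_comp_subset_range ι F
  obtain ⟨v, hv, hvF⟩ : ∃ v ∉ range (F ∘ ι), v ∈ range F → range F = univ := by
    by_cases hsurj : range F = univ
    · obtain ⟨v, hv⟩ := (ne_univ_iff_exists_notMem _).1 (range_ne_univ_of_eventually_injective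
        (fun _ _ => isPreconnected_compl_pair_sphere) (hF.comp hι) hq)
      exact ⟨v, hv, fun _ => hsurj⟩
    · obtain ⟨v, hv⟩ := (ne_univ_iff_exists_notMem _).1 hsurj
      exact ⟨v, fun h => hv (hFι h), fun h => absurd h hv⟩
  obtain ⟨σ, hσ, hrange⟩ := exists_isOpenEmbedding_complex_sphere v
  obtain ⟨φ, hφ, hσφ⟩ := exists_continuous_comp_eq_of_range_subset hσ.isInducing (hF.comp hι)
    (hrange ▸ subset_compl_singleton_iff.2 hv)
  have hσφ' : ∀ w, σ (φ w) = F (ι w) := congrFun hσφ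
  obtain ⟨y, hy, hqy, hyσ⟩ := exists_mem_closure_connectedComponentIn_subset_image hσ hφ
    (hq.mono fun w hw w' hw' => hw w' (by rw [← hσφ', hw', hσφ']))
  rw [hσφ] at hy hqy hyσ
  refine ⟨y, hy, hσφ' q ▸ hqy, ?_⟩
  by_cases hvr : v ∈ range F
  · exact hvF hvr ▸ subset_univ _
  obtain ⟨Ψ, hΨ, rfl⟩ := exists_continuous_comp_eq_of_range_subset hσ.isInducing hF
    (hrange ▸ subset_compl_singleton_iff.2 hvr)
  obtain rfl : φ = Ψ ∘ ι := funext fun w => hσ.injective (hσφ' w)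
  refine hyσ.trans ?_
  rintro _ ⟨z, hz, rfl⟩
  obtain ⟨w, rfl⟩ : z ∈ range Ψ := not_not.1 fun hzΨ =>
    hz (HasContinuousLogOn.comp_sub_of_notMem_range (Ψ := Ψ) hΨ hι hzΨ)
  exact mem_range_self w

theorem strong_jordan_separation_extension_general {P E : Type*} [TopologicalSpace P]
    [NormedAddCommGroup E] [InnerProductSpace ℝ E] [Fact (Module.finrank ℝ E = 2 + 1)]
    {D : Set P} [SimplyConnectedSpace D] [LocallyPathConnectedSpace D] {F : P → E}
    {γ : Circle → P} {q : Circle} (hF : ContinuousOn F D) (hFmaps : MapsTo F D (sphere 0 1))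
    (hγ : Continuous γ) (hγD : ∀ w, γ w ∈ D)
    (hq : ∀ᶠ w in nhds q, ∀ w', F (γ w') = F (γ w) → w' = w) :
    ∃ y ∈ sphere 0 1 \ F '' range γ,
      F (γ q) ∈ closure (connectedComponentIn (sphere 0 1 \ F '' range γ) y) ∧
      connectedComponentIn (sphere 0 1 \ F '' range γ) y ⊆ F '' D := by
  set F' : D → sphere (0 : E) 1 := hFmaps.restrict F D (sphere 0 1)
  set ι : Circle → D := fun w => ⟨γ w, hγD w⟩
  obtain ⟨y, hy, hqy, hyF⟩ := exists_mem_closure_connectedComponentIn_subset_range (q := q)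
    (hF.mapsToRestrict hFmaps) (hγ.subtype_mk hγD)
    (hq.mono fun w hw w' hww' => hw w' (congrArg Subtype.val hww'))
  have hcompl : Subtype.val '' (range (F' ∘ ι))ᶜ = sphere 0 1 \ F '' range γ := by
    rw [image_val_compl, ← range_comp, ← range_comp]
    rfl
  have himage : Subtype.val '' connectedComponentIn (range (F' ∘ ι))ᶜ y =
      connectedComponentIn (sphere 0 1 \ F '' range γ) y :=
    hcompl ▸ image_connectedComponentIn_of_isEmbedding .subtypeVal hy
  refine ⟨y, hcompl ▸ mem_image_of_mem _ hy, himage ▸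
    image_closure_subset_closure_image continuous_subtype_val (mem_image_of_mem _ hqy),
    himage ▸ (image_mono hyF).trans ?_⟩
  rintro _ ⟨_, ⟨x, rfl⟩, rfl⟩
  exact mem_image_of_mem F x.2

end Sphere

section Euclidean

/-- The standard homeomorphism of `Circle`, the unit circle of `ℂ`, onto `circleS`. -/
def circleParam (w : Circle) : EuclideanSpace ℝ (Fin 2) :=
  Complex.orthonormalBasisOneI.repr (w : ℂ)

theorem continuous_circleParam : Continuous circleParam :=
  Complex.orthonormalBasisOneI.repr.continuous.comp continuous_subtype_val

theorem injective_circleParam : Function.Injective circleParam :=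
  Complex.orthonormalBasisOneI.repr.injective.comp Circle.coe_injective

theorem range_circleParam : range circleParam = circleS := by
  ext x
  refine ⟨?_, fun hx => ?_⟩
  · rintro ⟨w, rfl⟩
    rw [circleS, mem_sphere_zero_iff_norm, circleParam, LinearIsometryEquiv.norm_map,
      Circle.norm_coe]
  · have hx' : Complex.orthonormalBasisOneI.repr.symm x ∈ sphere 0 1 := by
      rw [mem_sphere_zero_iff_norm, LinearIsometryEquiv.norm_map]
      exact mem_sphere_zero_iff_norm.1 hx
    exact ⟨⟨_, hx'⟩, Complex.orthonormalBasisOneI.repr.apply_symm_apply x⟩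

theorem circleParam_mem (w : Circle) : circleParam w ∈ circleS :=
  range_circleParam ▸ mem_range_self w

theorem convex_diskS : Convex ℝ diskS := convex_closedBall 0 1

instance : LocallyPathConnectedSpace diskS := convex_diskS.locallyPathConnectedSpace

instance : ContractibleSpace diskS :=
  convex_diskS.contractibleSpace ⟨0, mem_closedBall_self zero_le_one⟩

theorem eventually_circleParam_injective {f : EuclideanSpace ℝ (Fin 2) → EuclideanSpace ℝ (Fin 3)}
    {V : Set (EuclideanSpace ℝ (Fin 2))} {q : Circle} (hV : IsOpen V)
    (hVf : V ∩ circleS ⊆ injPts f) (hq : circleParam q ∈ V) :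
    ∀ᶠ w in nhds q, ∀ w', f (circleParam w') = f (circleParam w) → w' = w := by
  filter_upwards [continuous_circleParam.continuousAt.preimage_mem_nhds (hV.mem_nhds hq)]
    with w hw w' hww'
  exact injective_circleParam ((hVf ⟨hw, circleParam_mem w⟩).2 _ (circleParam_mem w') hww')

end Euclidean

/-- **Strong Jordan separation, extension part.**  If the set of injective points of a
continuous `f : S¹ → S²` contains a nonempty relatively open set `U`, `q ∈ U`, `p = f q`, and
`F : D² → S²` is a continuous extension of `f` to the closed disk, then some connected
component `C` of `S² \ f(S¹)` with `p ∈ closure C` satisfies `C ⊆ F(D²)`. -/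
theorem strong_jordan_separation_extension
    (f : EuclideanSpace ℝ (Fin 2) → EuclideanSpace ℝ (Fin 3))
    (hf : ContinuousOn f circleS) (hmaps : MapsTo f circleS sphereS)
    (U : Set (EuclideanSpace ℝ (Fin 2))) (hUne : U.Nonempty) (hUI : U ⊆ injPts f)
    (hUopen : ∃ V, IsOpen V ∧ U = V ∩ circleS)
    (q : EuclideanSpace ℝ (Fin 2)) (hq : q ∈ U)
    (F : EuclideanSpace ℝ (Fin 2) → EuclideanSpace ℝ (Fin 3))
    (hF : ContinuousOn F diskS) (hFmaps : MapsTo F diskS sphereS)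
    (hFf : ∀ x ∈ circleS, F x = f x) :
    ∃ C : Set (EuclideanSpace ℝ (Fin 3)),
      IsCompOf C (sphereS \ f '' circleS) ∧ f q ∈ closure C ∧ C ⊆ F '' diskS := by
  obtain ⟨V, hV, rfl⟩ := hUopen
  obtain ⟨q, rfl⟩ : q ∈ range circleParam := range_circleParam ▸ hq.2
  have : Fact (Module.finrank ℝ (EuclideanSpace ℝ (Fin 3)) = 2 + 1) := ⟨by simp⟩
  have hFf' : ∀ w, F (circleParam w) = f (circleParam w) := fun w => hFf _ (circleParam_mem w)
  obtain ⟨y, hy, hqy, hyF⟩ := strong_jordan_separation_extension_general hF hFmaps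
    continuous_circleParam (fun w => sphere_subset_closedBall (circleParam_mem w)) (q := q)
    (by simpa only [hFf'] using eventually_circleParam_injective hV hUI hq.1)
  rw [range_circleParam, image_congr hFf] at hy hqy hyF
  exact ⟨_, ⟨y, hy, rfl⟩, hFf' q ▸ hqy, hyF⟩
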